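/- Let ν ∈ P_{2,0}(ℝ^d). Then the set M_ν^K := {μ ∈ P_2(ℝ^d) : μ ≼_K ν} is precompact in the weak topology on probability measures on ℝ^d. Moreover, if Ω ⊂ ℝ^d is compact, then M_{ν,Ω}^K := {μ ∈ P_2(Ω) : μ ≼_K ν} is compact in both the weak topology and the W_2 metric. -/

import Mathlib

/-!
If a coupling `π` of `μ` and `ν` satisfies `∫ ⟨x, y - x⟩ dπ = 0`, then `2⟨x, y - x⟩ ≤ ‖y‖² - ‖x‖²`
gives `∫ ‖x‖² dμ ≤ ∫ ‖y‖² dν` (`secondMoment_le`). Hence the measures dominated by `ν` are tight, and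
so are their couplings with `ν`; by Prokhorov's theorem every sequence of couplings has a weakly
convergent subsequence (`exists_subseq_couplings`). Its first marginals converge weakly, which is
the precompactness claim.

If all `μ` live on a compact `Ω`, the limit does too, by the portmanteau theorem, and the limit
coupling still has second marginal `ν`. The constraint survives in the limit
(`coupling_integral_eq_zero`): `x` is bounded, and truncating `y` at level `R` costs at most
`C ∫ ‖y - trunc R y‖ dν`, which is uniform along the sequence and tends to `0` as `R → ∞`.

For `W₂` convergence (`tendsto_W2_of_weakTendsto`), take a finite partition of unity of `Ω`
subordinate to `ε`-balls. Weak convergence makes the masses of the pieces converge, and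
`exists_block_coupling` couples the pieces blockwise, moving all but a vanishing amount of mass by
at most `2ε`.
-/

open MeasureTheory Filter
open scoped RealInnerProductSpace Topology

noncomputable section

/-- `Rd d` is the Euclidean space `ℝ^d`. -/
abbrev Rd (d : ℕ) := EuclideanSpace ℝ (Fin d)

/-- A measure has finite second moment if `x ↦ ‖x‖²` is integrable. -/
def FiniteSecondMoment {d : ℕ} (μ : Measure (Rd d)) : Prop :=
  Integrable (fun x => ‖x‖ ^ 2) μ

/-- `π` is a coupling of `μ` and `ν` if its marginals are `μ` and `ν`. -/
def IsCoupling {d : ℕ} (π : Measure (Rd d × Rd d)) (μ ν : Measure (Rd d)) : Prop :=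
  π.map Prod.fst = μ ∧ π.map Prod.snd = ν

/-- The squared 2-Wasserstein distance: `W₂²(μ,ν) = inf_{π ∈ Π(μ,ν)} ∫ |x-y|² dπ`. -/
def W2sq {d : ℕ} (μ ν : Measure (Rd d)) : ℝ :=
  sInf ((fun π : Measure (Rd d × Rd d) => ∫ p, ‖p.1 - p.2‖ ^ 2 ∂π) ''
    {π | IsCoupling π μ ν})

/-- The 2-Wasserstein distance. -/
def W2 {d : ℕ} (μ ν : Measure (Rd d)) : ℝ := Real.sqrt (W2sq μ ν)

/-- The variance of a measure: `Var(μ) = ∫ |x - ∫ x dμ|² dμ(x)`. -/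
def Var {d : ℕ} (μ : Measure (Rd d)) : ℝ := ∫ x, ‖x - ∫ y, y ∂μ‖ ^ 2 ∂μ

/-- Convex order: `μ ≤_c ν` iff `∫ f dμ ≤ ∫ f dν` for every (integrable) convex `f`. -/
def ConvexOrder {d : ℕ} (μ ν : Measure (Rd d)) : Prop :=
  ∀ f : Rd d → ℝ, ConvexOn ℝ Set.univ f → Integrable f μ → Integrable f ν →
    ∫ x, f x ∂μ ≤ ∫ x, f x ∂ν

/-- Kantorovich dominance: `μ ≼_K ν` iff there is a coupling `π` of `μ` and `ν` with
`∫ ⟨x - b_ν, y - x⟩ dπ = 0`, where `b_ν` is the barycenter of `ν`. -/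
def KDom {d : ℕ} (μ ν : Measure (Rd d)) : Prop :=
  ∃ π : Measure (Rd d × Rd d), IsCoupling π μ ν ∧
    (∫ p : Rd d × Rd d, ⟪p.1 - ∫ y, y ∂ν, p.2 - p.1⟫ ∂π) = 0

/-- Weak convergence of a sequence of measures (convergence of integrals of all bounded
continuous functions). -/
def WeakTendsto {d : ℕ} (μs : ℕ → Measure (Rd d)) (μ : Measure (Rd d)) : Prop :=
  ∀ f : BoundedContinuousFunction (Rd d) ℝ,
    Tendsto (fun n => ∫ x, f x ∂(μs n)) atTop (𝓝 (∫ x, f x ∂μ))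

/-- Membership in `M_{ν,Ω}^K = {μ ∈ P₂(Ω) : μ ≼_K ν}`: a probability measure with finite
second moment, concentrated on `Ω`, Kantorovich-dominated by `ν`. -/
def MemMK {d : ℕ} (Ω : Set (Rd d)) (ν μ : Measure (Rd d)) : Prop :=
  IsProbabilityMeasure μ ∧ FiniteSecondMoment μ ∧ μ Ωᶜ = 0 ∧ KDom μ ν

/-! ### Weak convergence on a compact set implies `W₂` convergence -/

/-- Two measures split into finitely many blocks `α i`, `β i` can be coupled so that as much mass as
possible stays within matching blocks: a property failing only on null sets of each
`α i ⊗ β i` fails with mass at most the total excess `∑ (α i - β i)₊` (truncated subtraction).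
The coupling puts mass `min (α i univ) (β i univ)` on a multiple of `α i ⊗ β i` and couples the
remainders, which have equal mass, by their normalized product. -/
theorem exists_block_coupling {X ι : Type*} [MeasurableSpace X] [Fintype ι]
    (α β : ι → Measure X) [∀ i, IsFiniteMeasure (α i)] [∀ i, IsFiniteMeasure (β i)]
    (hmass : ∑ i, α i Set.univ = ∑ i, β i Set.univ) :
    ∃ π : Measure (X × X), π.map Prod.fst = ∑ i, α i ∧ π.map Prod.snd = ∑ i, β i ∧
      ∀ S : Set (X × X), (∀ i, (α i).prod (β i) S = 0) →
        π S ≤ ∑ i, (α i Set.univ - β i Set.univ) := by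
  set a : ι → ENNReal := fun i => α i Set.univ with ha
  set b : ι → ENNReal := fun i => β i Set.univ with hb
  have hat : ∀ i, a i ≠ ⊤ := fun i => measure_ne_top _ _
  have hbt : ∀ i, b i ≠ ⊤ := fun i => measure_ne_top _ _
  set c : ι → ENNReal := fun i => min (a i) (b i) / (a i * b i) with hc
  have hcab : ∀ i, c i * b i * a i = min (a i) (b i) := by
    intro i
    rw [mul_assoc, mul_comm (b i), hc]
    by_cases h : a i * b i = 0
    · rw [h, mul_zero]
      rcases mul_eq_zero.1 h with h | h <;> simp [h]
    · exact ENNReal.div_mul_cancel h (ENNReal.mul_ne_top (hat i) (hbt i))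
  have hp : ∀ i, c i * b i ≤ 1 := by
    intro i
    by_cases h : a i = 0
    · simp [hc, h]
    · have := hcab i
      rw [← ENNReal.mul_le_mul_iff_left h (hat i), this, one_mul]
      exact min_le_left _ _
  have hq : ∀ i, c i * a i ≤ 1 := by
    intro i
    by_cases h : b i = 0
    · simp [hc, h]
    · have := hcab i
      rw [← ENNReal.mul_le_mul_iff_left h (hbt i), mul_right_comm, this, one_mul]
      exact min_le_right _ _
  set r := ∑ i, (a i - b i) with hr
  have hrt : r ≠ ⊤ := ENNReal.sum_ne_top.2 fun i _ => ENNReal.sub_ne_top (hat i)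
  -- the two families of excess masses have the same total
  have hr' : r = ∑ i, (b i - a i) := by
    have h1 : r + ∑ i, min (a i) (b i) = ∑ i, a i := by
      rw [hr, ← Finset.sum_add_distrib]
      exact Finset.sum_congr rfl fun i _ => tsub_add_min
    have h2 : ∑ i, (b i - a i) + ∑ i, min (a i) (b i) = ∑ i, b i := by
      rw [← Finset.sum_add_distrib]
      exact Finset.sum_congr rfl fun i _ => by rw [min_comm]; exact tsub_add_min
    have h3 : ∑ i, min (a i) (b i) ≠ ⊤ :=
      ENNReal.sum_ne_top.2 fun i _ => ne_top_of_le_ne_top (hat i) (min_le_left _ _)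
    exact (ENNReal.add_left_inj h3).1 (by rw [h1, h2]; exact hmass)
  set α' : Measure X := ∑ i, (1 - c i * b i) • α i with hα'
  set β' : Measure X := ∑ i, (1 - c i * a i) • β i with hβ'
  have hαu : α' Set.univ = r := by
    simp only [hα', hr, Measure.coe_finsetSum, Finset.sum_apply, Measure.smul_apply, smul_eq_mul]
    refine Finset.sum_congr rfl fun i _ => ?_
    rw [ENNReal.sub_mul fun _ _ => measure_ne_top _ _, one_mul]
    change a i - c i * b i * a i = _
    rw [hcab, tsub_min]
  have hβu : β' Set.univ = r := by
    simp only [hβ', hr', Measure.coe_finsetSum, Finset.sum_apply, Measure.smul_apply, smul_eq_mul]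
    refine Finset.sum_congr rfl fun i _ => ?_
    rw [ENNReal.sub_mul fun _ _ => measure_ne_top _ _, one_mul]
    change b i - c i * a i * b i = _
    rw [mul_right_comm, hcab, min_comm, tsub_min]
  have : IsFiniteMeasure α' := ⟨by rw [hαu]; exact hrt.lt_top⟩
  have : IsFiniteMeasure β' := ⟨by rw [hβu]; exact hrt.lt_top⟩
  -- for `r = 0` this uses `r⁻¹ * 0 = ⊤ * 0 = 0`
  have key : ∀ t : ENNReal, t ≤ r → r⁻¹ * (t * r) = t := by
    intro t ht
    by_cases h : r = 0
    · rw [h, mul_zero, mul_zero]; exact (le_antisymm (h ▸ ht) zero_le).symm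
    · rw [mul_comm t, ← mul_assoc, ENNReal.inv_mul_cancel h hrt, one_mul]
  refine ⟨∑ i, c i • (α i).prod (β i) + r⁻¹ • α'.prod β', ?_, ?_, ?_⟩
  · ext s hs
    rw [Measure.map_apply measurable_fst hs, ← Set.prod_univ]
    simp only [Measure.add_apply, Measure.coe_finsetSum, Finset.sum_apply, Measure.smul_apply,
      smul_eq_mul, Measure.prod_prod, hβu]
    rw [key _ (hαu ▸ measure_mono (Set.subset_univ s))]
    simp only [hα', Measure.coe_finsetSum, Finset.sum_apply, Measure.smul_apply, smul_eq_mul]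
    rw [← Finset.sum_add_distrib]
    refine Finset.sum_congr rfl fun i _ => ?_
    rw [mul_comm (α i s), ← mul_assoc, ← add_mul, add_tsub_cancel_of_le (hp i), one_mul]
  · ext s hs
    rw [Measure.map_apply measurable_snd hs, ← Set.univ_prod]
    simp only [Measure.add_apply, Measure.coe_finsetSum, Finset.sum_apply, Measure.smul_apply,
      smul_eq_mul, Measure.prod_prod, hαu]
    rw [mul_comm r (β' s), key _ (hβu ▸ measure_mono (Set.subset_univ s))]
    simp only [hβ', Measure.coe_finsetSum, Finset.sum_apply, Measure.smul_apply, smul_eq_mul]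
    rw [← Finset.sum_add_distrib]
    refine Finset.sum_congr rfl fun i _ => ?_
    rw [← mul_assoc, ← add_mul, add_tsub_cancel_of_le (hq i), one_mul]
  · intro S hS
    simp only [Measure.add_apply, Measure.coe_finsetSum, Finset.sum_apply, Measure.smul_apply,
      smul_eq_mul, hS, mul_zero, Finset.sum_const_zero, zero_add]
    calc r⁻¹ * α'.prod β' S ≤ r⁻¹ * α'.prod β' Set.univ := by gcongr; exact Set.subset_univ S
      _ = r := by rw [← Set.univ_prod_univ, Measure.prod_prod, hαu, hβu, key r le_rfl]

theorem W2sq_nonneg {d : ℕ} (μ ν : Measure (Rd d)) : 0 ≤ W2sq μ ν := by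
  apply Real.sInf_nonneg
  rintro _ ⟨π, -, rfl⟩
  exact integral_nonneg fun p => by positivity

theorem W2sq_le {d : ℕ} {μ ν : Measure (Rd d)} {π : Measure (Rd d × Rd d)}
    (h : IsCoupling π μ ν) : W2sq μ ν ≤ ∫ p, ‖p.1 - p.2‖ ^ 2 ∂π := by
  refine csInf_le ⟨0, ?_⟩ ⟨π, h, rfl⟩
  rintro _ ⟨π, -, rfl⟩
  exact integral_nonneg fun p => by positivity

theorem IsCoupling.isProbabilityMeasure {d : ℕ} {μ ν : Measure (Rd d)} [IsProbabilityMeasure μ]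
    {π : Measure (Rd d × Rd d)} (h : IsCoupling π μ ν) : IsProbabilityMeasure π :=
  ⟨by
    have := congrArg (fun m => m Set.univ) h.1
    simpa [Measure.map_apply measurable_fst MeasurableSet.univ] using this⟩

/-- Quantitative bound on `W₂²` for measures on a bounded set `Ω`: pieces of mass matched by the
partition of unity move at most `2ε`, and the unmatched mass moves at most the diameter `2R`. -/
theorem W2sq_le_of_partition {d : ℕ} {Ω : Set (Rd d)} {ι : Type*} [Fintype ι]
    (f : PartitionOfUnity ι (Rd d) Ω) (x : ι → Rd d) {ε R : ℝ}
    (hf : f.IsSubordinate fun i => Metric.ball (x i) ε) (hR : ∀ y ∈ Ω, ‖y‖ ≤ R)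
    {μ ν : Measure (Rd d)} [IsProbabilityMeasure μ] [IsProbabilityMeasure ν]
    (hμ : μ Ωᶜ = 0) (hν : ν Ωᶜ = 0) :
    W2sq μ ν ≤ (2 * ε) ^ 2 + (2 * R) ^ 2 *
      (∑ i, (ENNReal.ofReal (∫ y, f i y ∂μ) - ENNReal.ofReal (∫ y, f i y ∂ν))).toReal := by
  have hsum : ∀ y ∈ Ω, ∑ i, f i y = 1 := fun y hy => by
    rw [← finsum_eq_sum_of_fintype]; exact f.sum_eq_one hy
  have hint : ∀ (m : Measure (Rd d)) [IsProbabilityMeasure m] (i : ι), Integrable (f i) m :=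
    fun m _ i => Integrable.of_bound (C := 1) (f i).continuous.aestronglyMeasurable
      (ae_of_all _ fun y => by
        rw [Real.norm_of_nonneg (f.nonneg i y)]; exact f.le_one i y)
  have hmeas : ∀ i, Measurable fun y => ENNReal.ofReal (f i y) := fun i =>
    ((f i).continuous.measurable).ennreal_ofReal
  -- the block `i` of a measure `m` is `f i • m`
  let w : Measure (Rd d) → ι → Measure (Rd d) :=
    fun m i => m.withDensity fun y => ENNReal.ofReal (f i y)
  have hwu : ∀ (m : Measure (Rd d)) [IsProbabilityMeasure m] (i : ι),
      w m i Set.univ = ENNReal.ofReal (∫ y, f i y ∂m) := fun m _ i => by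
    rw [ofReal_integral_eq_lintegral_ofReal (hint m i) (ae_of_all _ fun y => f.nonneg i y)]
    simp [w]
  have hwsum : ∀ (m : Measure (Rd d)) [IsProbabilityMeasure m], m Ωᶜ = 0 → ∑ i, w m i = m := by
    intro m _ hm
    ext s hs
    simp only [w, Measure.coe_finsetSum, Finset.sum_apply, withDensity_apply _ hs]
    rw [← lintegral_finsetSum _ fun i _ => hmeas i]
    have : ∀ᵐ y ∂m.restrict s, ∑ i, ENNReal.ofReal (f i y) = 1 := by
      refine ae_restrict_of_ae ?_
      have h : ∀ᵐ y ∂m, y ∈ Ω := hm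
      filter_upwards [h] with y hy
      rw [← ENNReal.ofReal_sum_of_nonneg fun i _ => f.nonneg i y, hsum y hy, ENNReal.ofReal_one]
    rw [lintegral_congr_ae this]; simp
  have hwfin : ∀ (m : Measure (Rd d)) [IsProbabilityMeasure m] (i : ι),
      IsFiniteMeasure (w m i) := fun m _ i => ⟨by rw [hwu]; exact ENNReal.ofReal_lt_top⟩
  have hwball : ∀ (m : Measure (Rd d)) (i : ι), ∀ᵐ y ∂(w m i), y ∈ Metric.ball (x i) ε := by
    intro m i
    rw [ae_withDensity_iff (hmeas i)]
    refine ae_of_all _ fun y hy => hf i (subset_tsupport _ ?_)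
    intro h0
    exact hy (by simp [h0])
  have := hwfin μ
  have := hwfin ν
  obtain ⟨π, h1, h2, h3⟩ := exists_block_coupling (w μ) (w ν) (by
    have e := congrArg (fun m => m Set.univ) (hwsum μ hμ)
    have e' := congrArg (fun m => m Set.univ) (hwsum ν hν)
    simp only [Measure.coe_finsetSum, Finset.sum_apply, measure_univ] at e e'
    rw [e, e'])
  rw [hwsum μ hμ] at h1
  rw [hwsum ν hν] at h2
  have hπ : IsCoupling π μ ν := ⟨h1, h2⟩
  have := hπ.isProbabilityMeasure
  set S : Set (Rd d × Rd d) := {p | 2 * ε < ‖p.1 - p.2‖} with hS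
  have hSm : MeasurableSet S := measurableSet_lt measurable_const (by fun_prop)
  have hπS := h3 S fun i => by
    have a1 : ∀ᵐ p ∂(w μ i).prod (w ν i), p.1 ∈ Metric.ball (x i) ε :=
      Measure.quasiMeasurePreserving_fst.ae (hwball μ i)
    have a2 : ∀ᵐ p ∂(w μ i).prod (w ν i), p.2 ∈ Metric.ball (x i) ε :=
      Measure.quasiMeasurePreserving_snd.ae (hwball ν i)
    have : ∀ᵐ p ∂(w μ i).prod (w ν i), p ∉ S := by
      filter_upwards [a1, a2] with p hp1 hp2
      rw [Metric.mem_ball] at hp1 hp2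
      rw [hS, Set.mem_ofPred_eq, not_lt, ← dist_eq_norm]
      linarith [dist_triangle_right p.1 p.2 (x i)]
    simpa [ae_iff] using this
  simp only [hwu] at hπS
  refine (W2sq_le hπ).trans ?_
  have b1 : ∀ᵐ p ∂π, p.1 ∈ Ω := ae_of_ae_map measurable_fst.aemeasurable (by rw [h1]; exact hμ)
  have b2 : ∀ᵐ p ∂π, p.2 ∈ Ω := ae_of_ae_map measurable_snd.aemeasurable (by rw [h2]; exact hν)
  have hI : Integrable (S.indicator fun _ => (2 * R) ^ 2) π :=
    (integrable_const _).indicator hSm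
  calc ∫ p, ‖p.1 - p.2‖ ^ 2 ∂π
      ≤ ∫ p, ((2 * ε) ^ 2 + S.indicator (fun _ => (2 * R) ^ 2) p) ∂π := by
        refine integral_mono_of_nonneg (ae_of_all _ fun p => by positivity)
          ((integrable_const _).add hI) ?_
        filter_upwards [b1, b2] with p hp1 hp2
        by_cases hp : p ∈ S
        · rw [Set.indicator_of_mem hp]
          have : ‖p.1 - p.2‖ ≤ 2 * R := by
            linarith [norm_sub_le p.1 p.2, hR _ hp1, hR _ hp2]
          have := pow_le_pow_left₀ (norm_nonneg _) this 2
          nlinarith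
        · rw [Set.indicator_of_notMem hp, add_zero]
          exact pow_le_pow_left₀ (norm_nonneg _) (not_lt.1 hp) 2
    _ = (2 * ε) ^ 2 + (2 * R) ^ 2 * (π S).toReal := by
        rw [integral_add (integrable_const _) hI, integral_indicator_const _ hSm]
        simp [Measure.real, mul_comm]
    _ ≤ _ := by
        gcongr
        exact ENNReal.sum_ne_top.2 fun i _ => ENNReal.sub_ne_top ENNReal.ofReal_ne_top

/-- On a compact set, weak convergence implies `W₂` convergence: for each `ε` the masses of a finite
partition of unity converge, so the unmatched mass vanishes. -/
theorem tendsto_W2_of_weakTendsto {d : ℕ} {Ω : Set (Rd d)} (hΩ : IsCompact Ω)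
    {μs : ℕ → Measure (Rd d)} {μ : Measure (Rd d)} [∀ n, IsProbabilityMeasure (μs n)]
    [IsProbabilityMeasure μ] (hs : ∀ n, μs n Ωᶜ = 0) (h : μ Ωᶜ = 0) (hw : WeakTendsto μs μ) :
    Tendsto (fun n => W2 (μs n) μ) atTop (𝓝 0) := by
  suffices H : Tendsto (fun n => W2sq (μs n) μ) atTop (𝓝 0) by
    simpa [W2, Function.comp_def] using (Real.continuous_sqrt.tendsto 0).comp H
  obtain ⟨R, hR⟩ := hΩ.isBounded.exists_norm_le
  have main : ∀ ε : ℝ, 0 < ε → ∀ᶠ n in atTop, W2sq (μs n) μ < (2 * ε) ^ 2 + ε := by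
    intro ε hε
    obtain ⟨t, -, ht⟩ := hΩ.elim_nhds_subcover (fun y => Metric.ball y ε)
      fun y _ => Metric.ball_mem_nhds y hε
    obtain ⟨f, hf⟩ := PartitionOfUnity.exists_isSubordinate hΩ.isClosed
      (fun i : t => Metric.ball (i : Rd d) ε) (fun _ => Metric.isOpen_ball)
      (by simpa [Set.iUnion_subtype] using ht)
    have hlim : Tendsto (fun n => (2 * ε) ^ 2 + (2 * R) ^ 2 * (∑ i,
        (ENNReal.ofReal (∫ y, f i y ∂(μs n)) - ENNReal.ofReal (∫ y, f i y ∂μ))).toReal)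
        atTop (𝓝 ((2 * ε) ^ 2 + (2 * R) ^ 2 * (∑ i : t,
        (ENNReal.ofReal (∫ y, f i y ∂μ) - ENNReal.ofReal (∫ y, f i y ∂μ))).toReal)) := by
      refine tendsto_const_nhds.add (tendsto_const_nhds.mul
        ((ENNReal.tendsto_toReal (by simp)).comp (tendsto_finsetSum _ fun i _ => ?_)))
      refine ENNReal.Tendsto.sub (ENNReal.tendsto_ofReal ?_) tendsto_const_nhds
        (Or.inl ENNReal.ofReal_ne_top)
      exact hw (BoundedContinuousFunction.ofNormedAddCommGroup (f i) (f i).continuous 1 fun y => by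
        rw [Real.norm_of_nonneg (f.nonneg i y)]; exact f.le_one i y)
    simp only [tsub_self, Finset.sum_const_zero, ENNReal.toReal_zero, mul_zero, add_zero] at hlim
    filter_upwards [hlim.eventually_lt_const (lt_add_of_pos_right _ hε)] with n hn
    exact (W2sq_le_of_partition f _ hf hR (hs n) h).trans_lt hn
  refine tendsto_order.2 ⟨fun a ha => Eventually.of_forall fun n => ha.trans_le (W2sq_nonneg _ _),
    fun a ha => ?_⟩
  -- for `ε ≤ 1` the bound `(2ε)² + ε` is at most `5ε`
  have hε : 0 < min 1 (a / 5) := by positivity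
  filter_upwards [main _ hε] with n hn
  have h1 := min_le_left 1 (a / 5)
  have h2 := min_le_right 1 (a / 5)
  nlinarith

/-! ### Second moment bound, tightness and compactness of couplings -/

theorem integrable_inner_sub {d : ℕ} {μ ν : Measure (Rd d)} (hμ : FiniteSecondMoment μ)
    (hν : FiniteSecondMoment ν) {π : Measure (Rd d × Rd d)} (hπ : IsCoupling π μ ν) :
    Integrable (fun p : Rd d × Rd d => ‖p.1‖ ^ 2) π ∧
    Integrable (fun p : Rd d × Rd d => ‖p.2‖ ^ 2) π ∧
    Integrable (fun p : Rd d × Rd d => ⟪p.1, p.2 - p.1⟫) π := by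
  have h1 : Integrable (fun p : Rd d × Rd d => ‖p.1‖ ^ 2) π := by
    have := hμ
    rw [FiniteSecondMoment, ← hπ.1] at this
    exact this.comp_measurable measurable_fst
  have h2 : Integrable (fun p : Rd d × Rd d => ‖p.2‖ ^ 2) π := by
    have := hν
    rw [FiniteSecondMoment, ← hπ.2] at this
    exact this.comp_measurable measurable_snd
  refine ⟨h1, h2, ((h1.const_mul 2).add h2).mono'
    (Continuous.aestronglyMeasurable (by fun_prop)) (ae_of_all _ fun p => ?_)⟩
  have a1 := norm_inner_le_norm (𝕜 := ℝ) p.1 (p.2 - p.1)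
  have a2 := norm_sub_le p.2 p.1
  have a3 := mul_le_mul_of_nonneg_left a2 (norm_nonneg p.1)
  refine a1.trans (a3.trans ?_)
  simp only [Pi.add_apply]
  nlinarith [sq_nonneg (‖p.1‖ - ‖p.2‖), norm_nonneg p.1, norm_nonneg p.2]

/-- Since `2⟨x, y - x⟩ ≤ ‖y‖² - ‖x‖²`, integrating against the coupling gives the bound. -/
theorem secondMoment_le {d : ℕ} {μ ν : Measure (Rd d)} (hμ : FiniteSecondMoment μ)
    (hν : FiniteSecondMoment ν) {π : Measure (Rd d × Rd d)} (hπ : IsCoupling π μ ν)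
    (h0 : ∫ p, ⟪p.1, p.2 - p.1⟫ ∂π = 0) : ∫ x, ‖x‖ ^ 2 ∂μ ≤ ∫ y, ‖y‖ ^ 2 ∂ν := by
  obtain ⟨h1, h2, h3⟩ := integrable_inner_sub hμ hν hπ
  have e1 : ∫ x, ‖x‖ ^ 2 ∂μ = ∫ p, ‖p.1‖ ^ 2 ∂π := by
    rw [← hπ.1]
    exact integral_map measurable_fst.aemeasurable (Continuous.aestronglyMeasurable (by fun_prop))
  have e2 : ∫ y, ‖y‖ ^ 2 ∂ν = ∫ p, ‖p.2‖ ^ 2 ∂π := by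
    rw [← hπ.2]
    exact integral_map measurable_snd.aemeasurable (Continuous.aestronglyMeasurable (by fun_prop))
  have : ∫ p, 2 * ⟪p.1, p.2 - p.1⟫ ∂π ≤ ∫ p, (‖p.2‖ ^ 2 - ‖p.1‖ ^ 2) ∂π := by
    refine integral_mono (h3.const_mul 2) (h2.sub h1) fun p => ?_
    have := norm_sub_sq_real p.2 p.1
    simp only [inner_sub_right, real_inner_self_eq_norm_sq]
    rw [real_inner_comm] at this
    nlinarith [sq_nonneg ‖p.2 - p.1‖]
  rw [integral_const_mul, h0, integral_sub h2 h1, ← e1, ← e2] at this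
  linarith

theorem isTightMeasureSet_of_secondMoment_le {d : ℕ} (S : Set (Measure (Rd d))) (C : ℝ)
    (hS : ∀ μ ∈ S, IsFiniteMeasure μ ∧ FiniteSecondMoment μ ∧ ∫ x, ‖x‖ ^ 2 ∂μ ≤ C) :
    IsTightMeasureSet S := by
  rw [isTightMeasureSet_iff_exists_isCompact_measure_compl_le]
  intro ε hε
  by_cases hεt : ε = ⊤
  · exact ⟨∅, isCompact_empty, fun μ _ => by simp [hεt]⟩
  have he : 0 < ε.toReal := ENNReal.toReal_pos hε.ne' hεt
  set r : ℝ := Real.sqrt (C / ε.toReal) + 1 with hr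
  have hr1 : 0 < r := by positivity
  have hr2 : C ≤ ε.toReal * r ^ 2 := by
    rw [mul_comm, ← div_le_iff₀ he]
    by_cases hC : 0 ≤ C / ε.toReal
    · nlinarith [Real.sq_sqrt hC, Real.sqrt_nonneg (C / ε.toReal)]
    · nlinarith [sq_nonneg r]
  refine ⟨Metric.closedBall 0 r, isCompact_closedBall _ _, fun μ hμ => ?_⟩
  obtain ⟨_, h2, h3⟩ := hS μ hμ
  have hm := mul_meas_ge_le_integral_of_nonneg
    (ae_of_all μ fun x : Rd d => sq_nonneg ‖x‖) h2 (r ^ 2)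
  have hsub : (Metric.closedBall (0 : Rd d) r)ᶜ ⊆ {x | r ^ 2 ≤ ‖x‖ ^ 2} := by
    intro x hx
    simp only [Set.mem_compl_iff, mem_closedBall_zero_iff, not_le] at hx
    exact pow_le_pow_left₀ hr1.le hx.le 2
  refine (measure_mono hsub).trans ?_
  rw [← ENNReal.toReal_le_toReal (measure_ne_top _ _) hεt]
  change μ.real _ ≤ _
  have : 0 < r ^ 2 := by positivity
  nlinarith

/-- The first marginals are tight by the second moment bound and the second marginal is fixed, so the
couplings are tight and Prokhorov's theorem applies. -/
theorem exists_subseq_couplings {d : ℕ} (ν : Measure (Rd d)) [IsProbabilityMeasure ν]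
    (hν2 : FiniteSecondMoment ν) (μs : ℕ → Measure (Rd d))
    (hp : ∀ n, IsProbabilityMeasure (μs n)) (hf : ∀ n, FiniteSecondMoment (μs n))
    (πs : ℕ → Measure (Rd d × Rd d)) (hπ : ∀ n, IsCoupling (πs n) (μs n) ν)
    (h0 : ∀ n, ∫ p, ⟪p.1, p.2 - p.1⟫ ∂(πs n) = 0) :
    ∃ (π : Measure (Rd d × Rd d)) (φ : ℕ → ℕ), StrictMono φ ∧ IsProbabilityMeasure π ∧
      ∀ f : BoundedContinuousFunction (Rd d × Rd d) ℝ,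
        Tendsto (fun n => ∫ p, f p ∂(πs (φ n))) atTop (𝓝 (∫ p, f p ∂π)) := by
  let P : ℕ → ProbabilityMeasure (Rd d × Rd d) :=
    fun n => ⟨πs n, (hπ n).isProbabilityMeasure⟩
  have hcomp : IsCompact (closure (Set.range P)) := by
    apply isCompact_closure_of_isTightMeasureSet
    have hset : {((m : ProbabilityMeasure (Rd d × Rd d)) : Measure (Rd d × Rd d)) |
        m ∈ Set.range P} = Set.range πs := by
      ext m
      constructor
      · rintro ⟨_, ⟨n, rfl⟩, rfl⟩; exact ⟨n, rfl⟩
      · rintro ⟨n, rfl⟩; exact ⟨P n, ⟨n, rfl⟩, rfl⟩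
    rw [hset]
    have hfst : (fun m : Measure (Rd d × Rd d) => m.map Prod.fst) '' Set.range πs
        = Set.range μs := by
      rw [← Set.range_comp]; congr 1; funext n; exact (hπ n).1
    have hsnd : (fun m : Measure (Rd d × Rd d) => m.map Prod.snd) '' Set.range πs ⊆ {ν} := by
      rintro _ ⟨_, ⟨n, rfl⟩, rfl⟩; exact (hπ n).2
    refine IsTightMeasureSet.prodMk ?_ ?_
    · refine (isTightMeasureSet_of_secondMoment_le (Set.range μs) (∫ y, ‖y‖ ^ 2 ∂ν) ?_).subset
        hfst.le
      rintro _ ⟨n, rfl⟩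
      exact ⟨inferInstance, hf n, secondMoment_le (hf n) hν2 (hπ n) (h0 n)⟩
    · exact isTightMeasureSet_singleton.subset hsnd
  obtain ⟨Q, -, φ, hφ, hQ⟩ := hcomp.tendsto_subseq fun n => subset_closure (Set.mem_range_self n)
  exact ⟨Q, φ, hφ, inferInstance, ProbabilityMeasure.tendsto_iff_forall_integral_tendsto.1 hQ⟩

/-! ### Passing the Kantorovich constraint to the limit -/

/-- Radial truncation of `ℝ^d` onto the closed ball of radius `R` (for `R > 0`). -/
def trunc {d : ℕ} (R : ℝ) (y : Rd d) : Rd d := (R / max R ‖y‖) • y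

theorem continuous_trunc {d : ℕ} {R : ℝ} (hR : 0 < R) :
    Continuous (trunc R : Rd d → Rd d) := by
  unfold trunc
  refine Continuous.smul (continuous_const.div (continuous_const.max continuous_norm) fun y => ?_) continuous_id
  exact (hR.trans_le (le_max_left _ _)).ne'

theorem norm_trunc_le {d : ℕ} {R : ℝ} (hR : 0 < R) (y : Rd d) : ‖trunc R y‖ ≤ R := by
  have h : 0 < max R ‖y‖ := hR.trans_le (le_max_left _ _)
  rw [trunc, norm_smul, Real.norm_of_nonneg (by positivity), div_mul_eq_mul_div, div_le_iff₀ h]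
  exact mul_le_mul_of_nonneg_left (le_max_right _ _) hR.le

theorem trunc_eq {d : ℕ} {R : ℝ} (hR : 0 < R) {y : Rd d} (h : ‖y‖ ≤ R) : trunc R y = y := by
  rw [trunc, max_eq_left h, div_self hR.ne', one_smul]

theorem norm_sub_trunc_le {d : ℕ} {R : ℝ} (hR : 0 < R) (y : Rd d) : ‖y - trunc R y‖ ≤ ‖y‖ := by
  have h : 0 < max R ‖y‖ := hR.trans_le (le_max_left _ _)
  have h1 : R / max R ‖y‖ ≤ 1 := (div_le_one h).2 (le_max_left _ _)
  have h2 : 0 ≤ R / max R ‖y‖ := by positivity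
  have : y - trunc R y = (1 - R / max R ‖y‖) • y := by rw [trunc, sub_smul, one_smul]
  rw [this, norm_smul, Real.norm_of_nonneg (by linarith)]
  exact mul_le_of_le_one_left (norm_nonneg y) (by linarith)

theorem integrable_norm_of_finiteSecondMoment {d : ℕ} {ν : Measure (Rd d)} [IsFiniteMeasure ν]
    (h : FiniteSecondMoment ν) : Integrable (fun y : Rd d => ‖y‖) ν :=
  ((integrable_const 1).add h).mono' continuous_norm.aestronglyMeasurable
    (ae_of_all _ fun y => by
      simp only [Pi.add_apply, norm_norm]
      nlinarith [sq_nonneg (‖y‖ - 1), sq_nonneg ‖y‖])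

theorem tendsto_integral_sub_trunc {d : ℕ} {ν : Measure (Rd d)} [IsFiniteMeasure ν]
    (h : FiniteSecondMoment ν) :
    Tendsto (fun k : ℕ => ∫ y, ‖y - trunc ((k : ℝ) + 1) y‖ ∂ν) atTop (𝓝 0) := by
  have hk : ∀ k : ℕ, (0 : ℝ) < k + 1 := fun k => by positivity
  have := tendsto_integral_of_dominated_convergence (μ := ν)
    (F := fun (k : ℕ) y => ‖y - trunc ((k : ℝ) + 1) y‖) (f := fun _ => 0) (fun y => ‖y‖)
    (fun k => ((continuous_id.sub (continuous_trunc (hk k))).norm).aestronglyMeasurable)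
    (integrable_norm_of_finiteSecondMoment h)
    (fun k => ae_of_all _ fun y => by simpa using norm_sub_trunc_le (hk k) y)
    (ae_of_all _ fun y => by
      refine tendsto_const_nhds.congr' ?_
      filter_upwards [eventually_ge_atTop ⌈‖y‖⌉₊] with k hky
      have h1 : ‖y‖ ≤ k := (Nat.le_ceil _).trans (by exact_mod_cast hky)
      rw [trunc_eq (hk k) (by linarith), sub_self, norm_zero])
  simpa using this

/-- When `μ` lives on the ball of radius `C`, replacing the unbounded integrand `⟨x, y - x⟩` by its
bounded continuous truncation costs at most `C ∫ ‖y - trunc R y‖ dν`, uniformly in the coupling. -/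
theorem abs_integral_inner_sub_le {d : ℕ} {μ ν : Measure (Rd d)} [IsProbabilityMeasure μ]
    [IsProbabilityMeasure ν] (hμ : FiniteSecondMoment μ)
    (hν : FiniteSecondMoment ν) {π : Measure (Rd d × Rd d)} (hπ : IsCoupling π μ ν)
    {C R : ℝ} (hC : 0 < C) (hR : 0 < R) (hμC : ∀ᵐ x ∂μ, ‖x‖ ≤ C) :
    |∫ p, ⟪p.1, p.2 - p.1⟫ ∂π - ∫ p, ⟪trunc C p.1, trunc R p.2 - trunc C p.1⟫ ∂π|
      ≤ C * ∫ y, ‖y - trunc R y‖ ∂ν := by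
  have := hπ.isProbabilityMeasure
  obtain ⟨-, -, h3⟩ := integrable_inner_sub hμ hν hπ
  have hcC := continuous_trunc (d := d) hC
  have hcR := continuous_trunc (d := d) hR
  have hx : ∀ᵐ p ∂π, ‖p.1‖ ≤ C :=
    ae_of_ae_map measurable_fst.aemeasurable (by rw [hπ.1]; exact hμC)
  have h4 : Integrable (fun p : Rd d × Rd d => ⟪trunc C p.1, trunc R p.2 - trunc C p.1⟫) π := by
    refine Integrable.of_bound (C := C * (R + C))
      (Continuous.aestronglyMeasurable (by fun_prop)) (ae_of_all _ fun p => ?_)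
    refine (norm_inner_le_norm _ _).trans (mul_le_mul (norm_trunc_le hC _) ?_
      (norm_nonneg _) hC.le)
    exact (norm_sub_le _ _).trans (add_le_add (norm_trunc_le hR _) (norm_trunc_le hC _))
  have hg : Integrable (fun y : Rd d => ‖y - trunc R y‖) ν :=
    (integrable_norm_of_finiteSecondMoment hν).mono'
      (Continuous.aestronglyMeasurable (by fun_prop))
      (ae_of_all _ fun y => by simpa using norm_sub_trunc_le hR y)
  have hg' : Integrable (fun p : Rd d × Rd d => ‖p.2 - trunc R p.2‖) π := by
    rw [← hπ.2] at hg
    exact hg.comp_measurable measurable_snd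
  have e : ∫ y, ‖y - trunc R y‖ ∂ν = ∫ p, ‖p.2 - trunc R p.2‖ ∂π := by
    rw [← hπ.2]
    exact integral_map measurable_snd.aemeasurable (Continuous.aestronglyMeasurable (by fun_prop))
  rw [← integral_sub h3 h4, e, ← integral_const_mul, ← Real.norm_eq_abs]
  refine norm_integral_le_of_norm_le (hg'.const_mul C) ?_
  filter_upwards [hx] with p hp
  rw [trunc_eq hC hp, ← inner_sub_right, sub_sub_sub_cancel_right]
  exact (norm_inner_le_norm _ _).trans (by gcongr)

/-- The constraint `∫ ⟨x, y - x⟩ dπ = 0` passes to weak limits of couplings with second marginal `ν`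
and first marginals in a fixed ball, although the integrand is unbounded. -/
theorem coupling_integral_eq_zero {d : ℕ} {μs : ℕ → Measure (Rd d)} {μ ν : Measure (Rd d)}
    [∀ n, IsProbabilityMeasure (μs n)] [IsProbabilityMeasure μ] [IsProbabilityMeasure ν]
    (hμs : ∀ n, FiniteSecondMoment (μs n)) (hμ : FiniteSecondMoment μ)
    (hν : FiniteSecondMoment ν) {C : ℝ} (hC : 0 < C) (hsC : ∀ n, ∀ᵐ x ∂(μs n), ‖x‖ ≤ C)
    (hμC : ∀ᵐ x ∂μ, ‖x‖ ≤ C) {πs : ℕ → Measure (Rd d × Rd d)} {π : Measure (Rd d × Rd d)}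
    (hπs : ∀ n, IsCoupling (πs n) (μs n) ν) (hπ : IsCoupling π μ ν)
    (h0 : ∀ n, ∫ p, ⟪p.1, p.2 - p.1⟫ ∂(πs n) = 0)
    (hlim : ∀ f : BoundedContinuousFunction (Rd d × Rd d) ℝ,
        Tendsto (fun n => ∫ p, f p ∂(πs n)) atTop (𝓝 (∫ p, f p ∂π))) :
    ∫ p, ⟪p.1, p.2 - p.1⟫ ∂π = 0 := by
  have key : ∀ k : ℕ, |∫ p, ⟪p.1, p.2 - p.1⟫ ∂π|
      ≤ 2 * C * ∫ y, ‖y - trunc ((k : ℝ) + 1) y‖ ∂ν := by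
    intro k
    have hR : (0 : ℝ) < k + 1 := by positivity
    have hcC := continuous_trunc (d := d) hC
    have hcR := continuous_trunc (d := d) hR
    have hl := hlim (BoundedContinuousFunction.ofNormedAddCommGroup
      (fun p => ⟪trunc C p.1, trunc ((k : ℝ) + 1) p.2 - trunc C p.1⟫) (by fun_prop)
      (C * ((k + 1) + C)) fun p => by
        refine (norm_inner_le_norm _ _).trans (mul_le_mul (norm_trunc_le hC _) ?_
          (norm_nonneg _) hC.le)
        exact (norm_sub_le _ _).trans (add_le_add (norm_trunc_le hR _) (norm_trunc_le hC _)))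
    have hb := le_of_tendsto hl.abs (Eventually.of_forall fun n => by
      have := abs_integral_inner_sub_le (hμs n) hν (hπs n) hC hR (hsC n)
      rw [h0 n, zero_sub, abs_neg] at this
      exact this)
    have ha := abs_integral_inner_sub_le hμ hν hπ hC hR hμC
    simp only [BoundedContinuousFunction.coe_ofNormedAddCommGroup] at hb
    have := abs_sub_abs_le_abs_sub (∫ p, ⟪p.1, p.2 - p.1⟫ ∂π)
      (∫ p, ⟪trunc C p.1, trunc ((k : ℝ) + 1) p.2 - trunc C p.1⟫ ∂π)
    linarith
  have hz := (tendsto_integral_sub_trunc hν).const_mul (2 * C)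
  rw [mul_zero] at hz
  exact abs_nonpos_iff.1 (ge_of_tendsto hz (Eventually.of_forall key))

/-! ### Marginals and support of the limit -/

theorem measure_compl_eq_zero_of_weakTendsto {d : ℕ} {Ω : Set (Rd d)} (hΩ : IsClosed Ω)
    {μs : ℕ → Measure (Rd d)} {μ : Measure (Rd d)} [∀ n, IsProbabilityMeasure (μs n)]
    [IsProbabilityMeasure μ] (hs : ∀ n, μs n Ωᶜ = 0) (hw : WeakTendsto μs μ) : μ Ωᶜ = 0 := by
  let P : ℕ → ProbabilityMeasure (Rd d) := fun n => ⟨μs n, inferInstance⟩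
  let Q : ProbabilityMeasure (Rd d) := ⟨μ, inferInstance⟩
  have hPQ : Tendsto P atTop (𝓝 Q) :=
    ProbabilityMeasure.tendsto_iff_forall_integral_tendsto.2 hw
  have := ProbabilityMeasure.limsup_measure_closed_le_of_tendsto hPQ hΩ
  have h1 : ∀ n, (P n : Measure (Rd d)) Ω = 1 := fun n =>
    (prob_compl_eq_zero_iff hΩ.measurableSet).1 (hs n)
  simp only [h1, limsup_const] at this
  exact (prob_compl_eq_zero_iff hΩ.measurableSet).2 (le_antisymm prob_le_one this)

theorem finiteSecondMoment_of_ae_norm_le {d : ℕ} {μ : Measure (Rd d)} [IsFiniteMeasure μ] {C : ℝ}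
    (h : ∀ᵐ x ∂μ, ‖x‖ ≤ C) : FiniteSecondMoment μ := by
  refine Integrable.of_bound (C := C ^ 2) (Continuous.aestronglyMeasurable (by fun_prop)) ?_
  filter_upwards [h] with x hx
  rw [Real.norm_of_nonneg (by positivity)]
  gcongr

theorem map_snd_eq_of_tendsto {d : ℕ} {ν : Measure (Rd d)} [IsProbabilityMeasure ν]
    {πs : ℕ → Measure (Rd d × Rd d)} {π : Measure (Rd d × Rd d)} [IsProbabilityMeasure π]
    (h : ∀ n, (πs n).map Prod.snd = ν)
    (hlim : ∀ f : BoundedContinuousFunction (Rd d × Rd d) ℝ,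
        Tendsto (fun n => ∫ p, f p ∂(πs n)) atTop (𝓝 (∫ p, f p ∂π))) :
    π.map Prod.snd = ν := by
  have := Measure.isProbabilityMeasure_map (μ := π) measurable_snd.aemeasurable
  refine ext_of_forall_integral_eq_of_IsFiniteMeasure fun f => ?_
  have e : ∀ ρ : Measure (Rd d × Rd d), ∫ y, f y ∂(ρ.map Prod.snd) = ∫ p, f p.2 ∂ρ := fun ρ =>
    integral_map measurable_snd.aemeasurable f.continuous.aestronglyMeasurable
  have hl := hlim (f.compContinuous ⟨Prod.snd, continuous_snd⟩)
  simp only [BoundedContinuousFunction.compContinuous_apply, ContinuousMap.coe_mk, ← e, h] at hl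
  exact tendsto_nhds_unique hl tendsto_const_nhds

theorem weakTendsto_map_fst {d : ℕ} {μs : ℕ → Measure (Rd d)}
    {πs : ℕ → Measure (Rd d × Rd d)} {π : Measure (Rd d × Rd d)}
    (h : ∀ n, (πs n).map Prod.fst = μs n)
    (hlim : ∀ f : BoundedContinuousFunction (Rd d × Rd d) ℝ,
        Tendsto (fun n => ∫ p, f p ∂(πs n)) atTop (𝓝 (∫ p, f p ∂π))) :
    WeakTendsto μs (π.map Prod.fst) := by
  intro f
  have e : ∀ ρ : Measure (Rd d × Rd d), ∫ y, f y ∂(ρ.map Prod.fst) = ∫ p, f p.1 ∂ρ := fun ρ =>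
    integral_map measurable_fst.aemeasurable f.continuous.aestronglyMeasurable
  have hl := hlim (f.compContinuous ⟨Prod.fst, continuous_fst⟩)
  simpa only [BoundedContinuousFunction.compContinuous_apply, ContinuousMap.coe_mk, ← e, h] using hl

/-! ### Compactness of the set of dominated measures -/

/-- For `ν ∈ P_{2,0}(ℝ^d)`: the set `M_ν^K = {μ ∈ P₂ : μ ≼_K ν}` is weakly precompact, and if
`Ω` is compact, `M_{ν,Ω}^K` is compact in the weak topology and in the `W₂` metric. -/
theorem stmt_11 {d : ℕ} (ν : Measure (Rd d)) [IsProbabilityMeasure ν]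
    (hν2 : FiniteSecondMoment ν) (hν0 : (∫ y, y ∂ν) = 0) :
    (∀ μs : ℕ → Measure (Rd d),
        (∀ n, IsProbabilityMeasure (μs n)) → (∀ n, FiniteSecondMoment (μs n)) →
        (∀ n, KDom (μs n) ν) →
        ∃ (μ : Measure (Rd d)) (φ : ℕ → ℕ), StrictMono φ ∧ IsProbabilityMeasure μ ∧
          WeakTendsto (fun k => μs (φ k)) μ) ∧
    (∀ Ω : Set (Rd d), IsCompact Ω →
      ∀ μs : ℕ → Measure (Rd d), (∀ n, MemMK Ω ν (μs n)) →
        ∃ (μ : Measure (Rd d)) (φ : ℕ → ℕ), StrictMono φ ∧ MemMK Ω ν μ ∧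
          WeakTendsto (fun k => μs (φ k)) μ ∧
          Tendsto (fun k => W2 (μs (φ k)) μ) atTop (𝓝 0)) := by
  refine ⟨fun μs hp hf hK => ?_, fun Ω hΩ μs hM => ?_⟩
  · choose πs hπ h0 using hK
    simp only [hν0, sub_zero] at h0
    obtain ⟨π, φ, hφ, _, hlim⟩ := exists_subseq_couplings ν hν2 μs hp hf πs hπ h0
    exact ⟨π.map Prod.fst, φ, hφ, Measure.isProbabilityMeasure_map measurable_fst.aemeasurable,
      weakTendsto_map_fst (fun n => (hπ (φ n)).1) hlim⟩
  · choose hp hf hc hK using hM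
    choose πs hπ h0 using hK
    simp only [hν0, sub_zero] at h0
    obtain ⟨π, φ, hφ, _, hlim⟩ := exists_subseq_couplings ν hν2 μs hp hf πs hπ h0
    have hw := weakTendsto_map_fst (fun n => (hπ (φ n)).1) hlim
    have hsnd := map_snd_eq_of_tendsto (fun n => (hπ (φ n)).2) hlim
    have hprob := Measure.isProbabilityMeasure_map (μ := π) measurable_fst.aemeasurable
    have hcμ := measure_compl_eq_zero_of_weakTendsto hΩ.isClosed (fun n => hc (φ n)) hw
    obtain ⟨C, hC, hΩC⟩ := hΩ.isBounded.exists_pos_norm_le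
    have hbound : ∀ m : Measure (Rd d), m Ωᶜ = 0 → ∀ᵐ x ∂m, ‖x‖ ≤ C := fun m hm => by
      have h : ∀ᵐ x ∂m, x ∈ Ω := hm
      filter_upwards [h] with x hx using hΩC x hx
    have hfμ := finiteSecondMoment_of_ae_norm_le (hbound _ hcμ)
    refine ⟨π.map Prod.fst, φ, hφ, ⟨hprob, hfμ, hcμ, π, ⟨rfl, hsnd⟩, ?_⟩, hw,
      tendsto_W2_of_weakTendsto hΩ (fun n => hc (φ n)) hcμ hw⟩
    simp only [hν0, sub_zero]
    exact coupling_integral_eq_zero (fun n => hf (φ n)) hfμ hν2 hC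
      (fun n => hbound _ (hc (φ n))) (hbound _ hcμ) (fun n => hπ (φ n)) ⟨rfl, hsnd⟩
      (fun n => h0 (φ n)) hlim
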